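/- Fix ρ ∈ (0,1) and ν ∈ ℝ. For the quantum walk driven by the matrix V alone (without the flip U_f), for every t = 0,1,2,… and every x ∈ ℤ, P(X_t = x) = ‖ ∫_{−π}^{π} e^{ikx} ( R(−k/2) · [[ρ₀, −ρ], [ρ, ρ₀]] )^{2t} · R(−ν/2) · (α, β)ᵀ dk/(2π) ‖², where R(φ) = [[e^{iφ}, 0], [0, e^{−iφ}]]. -/

import Mathlib

open Real

noncomputable section

/-- `ρ₀ = √(1-ρ²)`. -/
def rz (ρ : ℝ) : ℝ := Real.sqrt (1 - ρ ^ 2)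

/-- `α₀ = ρ e^{iν}`. -/
def az (ρ ν : ℝ) : ℂ := (ρ : ℂ) * Complex.exp (Complex.I * (ν : ℂ))

/-- `C₋`. -/
def Cm (ρ ν : ℝ) : Matrix (Fin 2) (Fin 2) ℂ :=
  !![0, 0; ((rz ρ : ℝ) : ℂ) * (starRingEnd ℂ) (az ρ ν), (((rz ρ) ^ 2 : ℝ) : ℂ)]

/-- `C₀`. -/
def C0 (ρ ν : ℝ) : Matrix (Fin 2) (Fin 2) ℂ :=
  !![-((ρ ^ 2 : ℝ) : ℂ), -(az ρ ν) * ((rz ρ : ℝ) : ℂ);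
      ((rz ρ : ℝ) : ℂ) * (starRingEnd ℂ) (az ρ ν), -((ρ ^ 2 : ℝ) : ℂ)]

/-- `C₊`. -/
def Cp (ρ ν : ℝ) : Matrix (Fin 2) (Fin 2) ℂ :=
  !![(((rz ρ) ^ 2 : ℝ) : ℂ), -(az ρ ν) * ((rz ρ : ℝ) : ℂ); 0, 0]

/-- The quantum walk driven by the matrix `V` alone. -/
def cwalk (ρ ν : ℝ) (α β : ℂ) : ℕ → ℤ → Fin 2 → ℂ
  | 0, x => if x = 0 then ![α, β] else 0
  | t + 1, x =>
      (Cm ρ ν).mulVec (cwalk ρ ν α β t (x + 1)) + (C0 ρ ν).mulVec (cwalk ρ ν α β t x)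
        + (Cp ρ ν).mulVec (cwalk ρ ν α β t (x - 1))

/-- `P(X_t = x) = ‖Ψ_t(x)‖²`. -/
def cprob (ρ ν : ℝ) (α β : ℂ) (t : ℕ) (x : ℤ) : ℝ :=
  norm (cwalk ρ ν α β t x 0) ^ 2 + norm (cwalk ρ ν α β t x 1) ^ 2

/-- `R(φ) = diag(e^{iφ}, e^{−iφ})`. -/
def Rmat (φ : ℝ) : Matrix (Fin 2) (Fin 2) ℂ :=
  !![Complex.exp (Complex.I * (φ : ℂ)), 0; 0, Complex.exp (-(Complex.I * (φ : ℂ)))]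

/-- The coin matrix `[[ρ₀, −ρ], [ρ, ρ₀]]`. -/
def Cmat (ρ : ℝ) : Matrix (Fin 2) (Fin 2) ℂ :=
  !![((rz ρ : ℝ) : ℂ), -((ρ : ℝ) : ℂ); ((ρ : ℝ) : ℂ), ((rz ρ : ℝ) : ℂ)]

/-- The integrand component. -/
def wv (ρ ν : ℝ) (α β : ℂ) (t : ℕ) (k : ℝ) : Fin 2 → ℂ :=
  ((Rmat (-k / 2) * Cmat ρ) ^ (2 * t)).mulVec ((Rmat (-ν / 2)).mulVec ![α, β])

def Jv (ρ ν : ℝ) (α β : ℂ) (t : ℕ) (x : ℤ) (i : Fin 2) : ℂ :=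
  ∫ k in (-π)..π, Complex.exp (Complex.I * (k : ℂ) * (x : ℂ)) * (wv ρ ν α β t k i)
    / (((2 * π : ℝ) : ℂ))

lemma RC_sq (ρ k : ℝ) : (Rmat (-k / 2) * Cmat ρ) ^ 2 =
    !![(rz ρ : ℂ) ^ 2 * Complex.exp (-(Complex.I * k)) - (ρ : ℂ) ^ 2,
        -((ρ : ℂ) * rz ρ * (1 + Complex.exp (-(Complex.I * k))));
       (ρ : ℂ) * rz ρ * (1 + Complex.exp (Complex.I * k)),
        (rz ρ : ℂ) ^ 2 * Complex.exp (Complex.I * k) - (ρ : ℂ) ^ 2] := by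
  have e1 : Complex.exp (-(Complex.I * k)) = Complex.exp (Complex.I * ((-k / 2 : ℝ) : ℂ)) ^ 2 := by
    rw [← Complex.exp_nat_mul]; congr 1; push_cast; ring
  have e2 : Complex.exp (Complex.I * k) = Complex.exp (-(Complex.I * ((-k / 2 : ℝ) : ℂ))) ^ 2 := by
    rw [← Complex.exp_nat_mul]; congr 1; push_cast; ring
  have e3 : Complex.exp (Complex.I * ((-k / 2 : ℝ) : ℂ)) *
      Complex.exp (-(Complex.I * ((-k / 2 : ℝ) : ℂ))) = 1 := by
    rw [← Complex.exp_add]; simp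
  rw [e1, e2, pow_two, Rmat, Cmat]
  generalize Complex.exp (Complex.I * ((-k / 2 : ℝ) : ℂ)) = u at *
  generalize Complex.exp (-(Complex.I * ((-k / 2 : ℝ) : ℂ))) = v at *
  ext i j
  fin_cases i <;> fin_cases j <;> simp [Matrix.mul_apply, Fin.sum_univ_two]
  · linear_combination (-(ρ : ℂ) ^ 2) * e3
  · linear_combination (-(ρ : ℂ) * rz ρ) * e3
  · linear_combination ((ρ : ℂ) * rz ρ) * e3
  · linear_combination (-(ρ : ℂ) ^ 2) * e3

lemma wv_succ (ρ ν : ℝ) (α β : ℂ) (t : ℕ) (k : ℝ) : wv ρ ν α β (t + 1) k =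
    ((Rmat (-k / 2) * Cmat ρ) ^ 2).mulVec (wv ρ ν α β t k) := by
  rw [wv, wv, show 2 * (t + 1) = 2 + 2 * t by ring, pow_add, ← Matrix.mulVec_mulVec]

lemma wv_succ0 (ρ ν : ℝ) (α β : ℂ) (t : ℕ) (k : ℝ) : wv ρ ν α β (t + 1) k 0 =
    ((rz ρ : ℂ) ^ 2 * Complex.exp (-(Complex.I * k)) - (ρ : ℂ) ^ 2) * wv ρ ν α β t k 0
    - ((ρ : ℂ) * rz ρ * (1 + Complex.exp (-(Complex.I * k)))) * wv ρ ν α β t k 1 := by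
  rw [wv_succ, RC_sq]
  simp [Matrix.mulVec, dotProduct, Fin.sum_univ_two]
  ring

lemma wv_succ1 (ρ ν : ℝ) (α β : ℂ) (t : ℕ) (k : ℝ) : wv ρ ν α β (t + 1) k 1 =
    ((ρ : ℂ) * rz ρ * (1 + Complex.exp (Complex.I * k))) * wv ρ ν α β t k 0
    + ((rz ρ : ℂ) ^ 2 * Complex.exp (Complex.I * k) - (ρ : ℂ) ^ 2) * wv ρ ν α β t k 1 := by
  rw [wv_succ, RC_sq]
  simp [Matrix.mulVec, dotProduct, Fin.sum_univ_two]

lemma wv_zero0 (ρ ν : ℝ) (α β : ℂ) (k : ℝ) : wv ρ ν α β 0 k 0 =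
    Complex.exp (Complex.I * ((-ν / 2 : ℝ) : ℂ)) * α := by
  simp [wv, Rmat, Matrix.mulVec, dotProduct, Fin.sum_univ_two]

lemma wv_zero1 (ρ ν : ℝ) (α β : ℂ) (k : ℝ) : wv ρ ν α β 0 k 1 =
    Complex.exp (-(Complex.I * ((-ν / 2 : ℝ) : ℂ))) * β := by
  simp [wv, Rmat, Matrix.mulVec, dotProduct, Fin.sum_univ_two]

lemma wv_cont (ρ ν : ℝ) (α β : ℂ) (t : ℕ) :
    Continuous (fun k => wv ρ ν α β t k 0) ∧ Continuous (fun k => wv ρ ν α β t k 1) := by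
  induction t with
  | zero => simp only [wv_zero0, wv_zero1]; exact ⟨continuous_const, continuous_const⟩
  | succ t ih =>
    obtain ⟨h0, h1⟩ := ih
    simp only [wv_succ0, wv_succ1]
    constructor <;> fun_prop

lemma integ (ρ ν : ℝ) (α β : ℂ) (t : ℕ) (x : ℤ) (i : Fin 2) :
    IntervalIntegrable (fun k : ℝ => Complex.exp (Complex.I * (k : ℂ) * (x : ℂ)) *
      (wv ρ ν α β t k i) / (((2 * π : ℝ) : ℂ))) MeasureTheory.volume (-π) π := by
  apply Continuous.intervalIntegrable
  obtain ⟨h0, h1⟩ := wv_cont ρ ν α β t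
  have h : Continuous (fun k => wv ρ ν α β t k i) := by
    fin_cases i
    · exact h0
    · exact h1
  fun_prop

lemma lin4 {f g h l : ℝ → ℂ} {a b : ℝ} (p q r s : ℂ)
    (hf : IntervalIntegrable f MeasureTheory.volume a b)
    (hg : IntervalIntegrable g MeasureTheory.volume a b)
    (hh : IntervalIntegrable h MeasureTheory.volume a b)
    (hl : IntervalIntegrable l MeasureTheory.volume a b) :
    ∫ k in a..b, (p * f k + q * g k + r * h k + s * l k) =
      p * (∫ k in a..b, f k) + q * (∫ k in a..b, g k) + r * (∫ k in a..b, h k)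
        + s * (∫ k in a..b, l k) := by
  rw [intervalIntegral.integral_add (((hf.const_mul p).add (hg.const_mul q)).add (hh.const_mul r))
      (hl.const_mul s),
    intervalIntegral.integral_add ((hf.const_mul p).add (hg.const_mul q)) (hh.const_mul r),
    intervalIntegral.integral_add (hf.const_mul p) (hg.const_mul q)]
  simp only [intervalIntegral.integral_const_mul]

lemma exp_shift_sub (k : ℝ) (x : ℤ) : Complex.exp (Complex.I * (k : ℂ) * ((x - 1 : ℤ) : ℂ)) =
    Complex.exp (Complex.I * (k : ℂ) * (x : ℂ)) * Complex.exp (-(Complex.I * k)) := by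
  rw [← Complex.exp_add]; congr 1; push_cast; ring

lemma exp_shift_add (k : ℝ) (x : ℤ) : Complex.exp (Complex.I * (k : ℂ) * ((x + 1 : ℤ) : ℂ)) =
    Complex.exp (Complex.I * (k : ℂ) * (x : ℂ)) * Complex.exp (Complex.I * k) := by
  rw [← Complex.exp_add]; congr 1; push_cast; ring

lemma Jv_succ0 (ρ ν : ℝ) (α β : ℂ) (t : ℕ) (x : ℤ) : Jv ρ ν α β (t + 1) x 0 =
    (rz ρ : ℂ) ^ 2 * Jv ρ ν α β t (x - 1) 0 + (-(ρ : ℂ) ^ 2) * Jv ρ ν α β t x 0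
    + (-((ρ : ℂ) * rz ρ)) * Jv ρ ν α β t x 1 + (-((ρ : ℂ) * rz ρ)) * Jv ρ ν α β t (x - 1) 1 := by
  unfold Jv
  rw [← lin4 _ _ _ _ (integ ρ ν α β t (x - 1) 0) (integ ρ ν α β t x 0)
    (integ ρ ν α β t x 1) (integ ρ ν α β t (x - 1) 1)]
  congr 1
  funext k
  rw [wv_succ0, exp_shift_sub]
  ring

lemma Jv_succ1 (ρ ν : ℝ) (α β : ℂ) (t : ℕ) (x : ℤ) : Jv ρ ν α β (t + 1) x 1 =
    ((ρ : ℂ) * rz ρ) * Jv ρ ν α β t x 0 + ((ρ : ℂ) * rz ρ) * Jv ρ ν α β t (x + 1) 0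
    + (-(ρ : ℂ) ^ 2) * Jv ρ ν α β t x 1 + (rz ρ : ℂ) ^ 2 * Jv ρ ν α β t (x + 1) 1 := by
  unfold Jv
  rw [← lin4 _ _ _ _ (integ ρ ν α β t x 0) (integ ρ ν α β t (x + 1) 0)
    (integ ρ ν α β t x 1) (integ ρ ν α β t (x + 1) 1)]
  congr 1
  funext k
  rw [wv_succ1, exp_shift_add]
  ring

lemma base_int (x : ℤ) (c : ℂ) :
    (∫ k in (-π)..π, Complex.exp (Complex.I * (k : ℂ) * (x : ℂ)) * c / (((2 * π : ℝ) : ℂ)))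
      = if x = 0 then c else 0 := by
  have hpi : (π : ℂ) ≠ 0 := by exact_mod_cast Real.pi_ne_zero
  split_ifs with h
  · subst h
    simp
    field_simp
    ring
  · have hc : Complex.I * (x : ℂ) ≠ 0 := mul_ne_zero Complex.I_ne_zero (by exact_mod_cast h)
    have : (fun k : ℝ => Complex.exp (Complex.I * (k : ℂ) * (x : ℂ)) * c / (((2 * π : ℝ) : ℂ))) =
        fun k : ℝ => (c / (((2 * π : ℝ) : ℂ))) * Complex.exp (Complex.I * (x : ℂ) * (k : ℂ)) := by
      funext k
      rw [mul_right_comm Complex.I]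
      ring
    rw [this, intervalIntegral.integral_const_mul, integral_exp_mul_complex hc]
    have : Complex.exp (Complex.I * (x : ℂ) * ((π : ℝ) : ℂ)) =
        Complex.exp (Complex.I * (x : ℂ) * ((-π : ℝ) : ℂ)) := by
      rw [Complex.exp_eq_exp_iff_exists_int]
      exact ⟨x, by push_cast; ring⟩
    rw [this]; simp

lemma main_eq (ρ ν : ℝ) (α β : ℂ) (t : ℕ) : ∀ x : ℤ,
    Jv ρ ν α β t x 0 = Complex.exp (Complex.I * ((-ν / 2 : ℝ) : ℂ)) * cwalk ρ ν α β t x 0 ∧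
    Jv ρ ν α β t x 1 = Complex.exp (-(Complex.I * ((-ν / 2 : ℝ) : ℂ))) * cwalk ρ ν α β t x 1 := by
  induction t with
  | zero =>
    intro x
    simp only [Jv, wv_zero0, wv_zero1, base_int, cwalk]
    split_ifs <;> simp
  | succ t ih =>
    intro x
    have e1 : Complex.exp (Complex.I * ν) =
        Complex.exp (-(Complex.I * ((-ν / 2 : ℝ) : ℂ))) ^ 2 := by
      rw [← Complex.exp_nat_mul]; congr 1; push_cast; ring
    have e2 : (starRingEnd ℂ) (Complex.exp (Complex.I * ν)) =
        Complex.exp (Complex.I * ((-ν / 2 : ℝ) : ℂ)) ^ 2 := by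
      rw [← Complex.exp_conj, ← Complex.exp_nat_mul]; congr 1; simp; ring
    have e3 : Complex.exp (Complex.I * ((-ν / 2 : ℝ) : ℂ)) *
        Complex.exp (-(Complex.I * ((-ν / 2 : ℝ) : ℂ))) = 1 := by
      rw [← Complex.exp_add]; simp
    rw [Jv_succ0, Jv_succ1, (ih x).1, (ih x).2, (ih (x - 1)).1, (ih (x - 1)).2,
      (ih (x + 1)).1, (ih (x + 1)).2]
    simp only [cwalk, Cm, C0, Cp, az, map_mul, e2, Complex.conj_ofReal]
    simp only [e1]
    generalize Complex.exp (Complex.I * ((-ν / 2 : ℝ) : ℂ)) = u at *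
    generalize Complex.exp (-(Complex.I * ((-ν / 2 : ℝ) : ℂ))) = v at *
    simp [Matrix.mulVec, dotProduct, Fin.sum_univ_two]
    constructor
    · linear_combination ((ρ : ℂ) * rz ρ * v *
        (cwalk ρ ν α β t x 1 + cwalk ρ ν α β t (x - 1) 1)) * e3
    · linear_combination (-(ρ : ℂ) * rz ρ * u *
        (cwalk ρ ν α β t x 0 + cwalk ρ ν α β t (x + 1) 0)) * e3

/-- Fourier representation of the position distribution for the walk driven
by `V` alone. -/
theorem stmt18 (ρ ν : ℝ) (hρ : ρ ∈ Set.Ioo (0 : ℝ) 1)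
    (α β : ℂ) (hαβ : norm α ^ 2 + norm β ^ 2 = 1) (t : ℕ) (x : ℤ) :
    cprob ρ ν α β t x =
      norm (∫ k in (-π)..π,
          Complex.exp (Complex.I * (k : ℂ) * (x : ℂ)) *
            (((Rmat (-k / 2) * Cmat ρ) ^ (2 * t)).mulVec
              ((Rmat (-ν / 2)).mulVec ![α, β]) 0) / (((2 * π : ℝ) : ℂ))) ^ 2
      + norm (∫ k in (-π)..π,
          Complex.exp (Complex.I * (k : ℂ) * (x : ℂ)) *
            (((Rmat (-k / 2) * Cmat ρ) ^ (2 * t)).mulVec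
              ((Rmat (-ν / 2)).mulVec ![α, β]) 1) / (((2 * π : ℝ) : ℂ))) ^ 2 := by
  have h := main_eq ρ ν α β t x
  have n1 : ‖Complex.exp (Complex.I * ((-ν / 2 : ℝ) : ℂ))‖ = 1 :=
    Complex.norm_exp_I_mul_ofReal _
  have n2 : ‖Complex.exp (-(Complex.I * ((-ν / 2 : ℝ) : ℂ)))‖ = 1 := by
    rw [Complex.exp_neg, norm_inv, n1, inv_one]
  change cprob ρ ν α β t x = norm (Jv ρ ν α β t x 0) ^ 2 + norm (Jv ρ ν α β t x 1) ^ 2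
  rw [h.1, h.2, norm_mul, norm_mul, n1, n2, one_mul, one_mul, cprob]

end
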